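/- arXiv:math/9906072 — 2 statements merged into one kernel-verified Lean document; each statement's English description precedes it below -/
import Mathlib

section
/- Let T be a bounded operator on a Hilbert space H such that 0 is in the left resolvent set of T (i.e., T has a bounded left inverse). Then dist(0, σ_ℓ(T)) = sup{ 1/r(S) : S ∈ L(H), ST = I }, where σ_ℓ(T) is the left spectrum of T and r(S) is the spectral radius of S. -/
/-!
If `b * a = 1` and `|z| < 1 / r(b)`, then `b * (z - a) = -(1 - z b)` is invertible, so `z` is not in
the left spectrum of `a`; hence `1 / r(b)` is at most the distance from `0` to the left spectrum.

Conversely, suppose that the disc `|z| ≤ d` avoids the left spectrum. By compactness the elements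
`(z - a)⋆ (z - a)` are uniformly bounded below on it. On each circle `|z| = t`, Parseval's identity
over the roots of unity turns this bound into an estimate of `∑ₖ (aᵏ)⋆ aᵏ / t²ᵏ` by its boundary
terms, which leaves only two behaviours: `(aᵐ)⋆ aᵐ / t²ᵐ` either decays at a rate bounded away from
`1`, or is eventually as large as any exponential of base less than `1`. The lower bound at `z = 0`
gives growth at some positive rate, and the gap in the dichotomy lets this rate be pushed up to any
`s < d`. Growth `s²ⁿ ≤ (aⁿ)⋆ aⁿ` means that `s² G ≤ a⋆ G a` for the strictly positive element
`G = ∑_{k < n} (aᵏ)⋆ aᵏ / s²ᵏ`. After conjugation by the square root of `G`, the element `a` has a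
left inverse of norm at most `1 / s`, and conjugating back does not change the spectral radius.
-/

open Finset Filter Topology

section RootsOfUnity

lemma sum_star_pow_mul_pow {N : ℕ} {w : ℂ} (hw : IsPrimitiveRoot w N) {k l : ℕ}
    (hk : k < N) (hl : l < N) :
    ∑ j ∈ range N, star (w ^ (j * k)) * w ^ (j * l) = if k = l then (N : ℂ) else 0 := by
  have hstar : star w = w⁻¹ := (Complex.inv_eq_conj (hw.norm'_eq_one (by lia))).symm
  have hterm (j : ℕ) : star (w ^ (j * k)) * w ^ (j * l) = ((w ^ k)⁻¹ * w ^ l) ^ j := by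
    rw [star_pow, hstar, mul_pow, ← inv_pow, ← pow_mul, ← pow_mul, mul_comm k, mul_comm l]
  simp only [hterm]
  have hw0 : w ≠ 0 := hw.ne_zero (by lia)
  split_ifs with hkl
  · simp [hkl, hw0]
  · have hne : (w ^ k)⁻¹ * w ^ l ≠ 1 := fun h ↦
      hkl (hw.pow_inj hk hl ((inv_mul_eq_one₀ (pow_ne_zero k hw0)).mp h))
    have hpow : ((w ^ k)⁻¹ * w ^ l) ^ N = 1 := by
      rw [mul_pow, inv_pow, pow_right_comm, pow_right_comm w l, hw.pow_eq_one]
      simp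
    rw [geom_sum_eq hne, hpow, sub_self, zero_div]

lemma smul_one_sub_mul_sum_pow_smul {R A : Type*} [CommRing R] [Ring A] [Algebra R A] (z : R)
    (a : A) (n : ℕ) :
    (z • 1 - a) * ∑ k ∈ range n, z ^ k • a ^ (n - 1 - k) = z ^ n • 1 - a ^ n := by
  have hcomm : Commute (z • (1 : A)) a := (Commute.one_left a).smul_left z
  simpa [smul_pow] using hcomm.mul_geom_sum₂ n

lemma star_sub_mul_sub_le {A : Type*} [NonUnitalRing A] [StarRing A] [PartialOrder A]
    [StarOrderedRing A] (x y : A) :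
    star (x - y) * (x - y) ≤ 2 • (star x * x + star y * y) := by
  have hsum : star (x - y) * (x - y) + star (x + y) * (x + y) =
      2 • (star x * x + star y * y) := by
    rw [star_sub, star_add]
    noncomm_ring
  exact hsum ▸ le_add_of_nonneg_right (star_mul_self_nonneg (x + y))

lemma smul_star_mul_self_le_of_smul_one_le {A : Type*} [Ring A] [StarRing A] [PartialOrder A]
    [StarOrderedRing A] [Algebra ℝ A] {b : A} {c : ℝ} (h : c • 1 ≤ star b * b) (x : A) :
    c • (star x * x) ≤ star (b * x) * (b * x) := by
  simpa [mul_assoc] using star_left_conjugate_le_conjugate h x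

variable {A : Type*} [Ring A] [StarRing A] [Algebra ℂ A] [StarModule ℂ A]

lemma sum_star_mul_self_sum_pow_smul {N : ℕ} {w : ℂ} (hw : IsPrimitiveRoot w N) (y : ℕ → A) :
    ∑ j ∈ range N, star (∑ k ∈ range N, w ^ (j * k) • y k) * ∑ k ∈ range N, w ^ (j * k) • y k =
      (N : ℝ) • ∑ k ∈ range N, star (y k) * y k := by
  calc
    _ = ∑ j ∈ range N, ∑ k ∈ range N, ∑ l ∈ range N,
          (star (w ^ (j * k)) * w ^ (j * l)) • (star (y k) * y l) := by
      simp only [star_sum, star_smul, sum_mul_sum, smul_mul_smul_comm]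
    _ = ∑ k ∈ range N, ∑ l ∈ range N,
          (∑ j ∈ range N, star (w ^ (j * k)) * w ^ (j * l)) • (star (y k) * y l) := by
      rw [sum_comm]
      refine sum_congr rfl fun k _ ↦ ?_
      rw [sum_comm]
      simp only [sum_smul]
    _ = ∑ k ∈ range N, (N : ℝ) • (star (y k) * y k) := by
      refine sum_congr rfl fun k hk ↦ ?_
      rw [sum_eq_single_of_mem k hk fun l hl hlk ↦ by
          rw [sum_star_pow_mul_pow hw (mem_range.mp hk) (mem_range.mp hl), if_neg hlk.symm,
            zero_smul],
        sum_star_pow_mul_pow hw (mem_range.mp hk) (mem_range.mp hk), if_pos rfl,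
        Nat.cast_smul_eq_nsmul, Nat.cast_smul_eq_nsmul]
    _ = _ := smul_sum.symm

variable [PartialOrder A] [StarOrderedRing A]

lemma smul_sum_star_pow_mul_pow_le {a : A} {κ : ℝ}
    (ha : ∀ z : ℂ, ‖z‖ = 1 → (2 * κ) • 1 ≤ star (z • 1 - a) * (z • 1 - a)) (n : ℕ) :
    κ • ∑ k ∈ range n, star (a ^ k) * a ^ k ≤ 1 + star (a ^ n) * a ^ n := by
  rcases eq_or_ne n 0 with rfl | hn
  · simpa using add_nonneg zero_le_one (zero_le_one (α := A))
  let w := Complex.exp (2 * Real.pi * Complex.I / n)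
  have hw : IsPrimitiveRoot w n := Complex.isPrimitiveRoot_exp n hn
  let u (j : ℕ) : A := ∑ k ∈ range n, w ^ (j * k) • a ^ (n - 1 - k)
  have hu (j : ℕ) : (w ^ j • 1 - a) * u j = 1 - a ^ n := by
    simpa [u, pow_mul, pow_right_comm w j n, hw.pow_eq_one] using
      smul_one_sub_mul_sum_pow_smul (w ^ j) a n
  have hterm (j : ℕ) : (2 * κ) • (star (u j) * u j) ≤ (2 : ℝ) • (1 + star (a ^ n) * a ^ n) := by
    have hz : ‖w ^ j‖ = 1 := by rw [norm_pow, hw.norm'_eq_one hn, one_pow]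
    calc
      (2 * κ) • (star (u j) * u j) ≤ star (1 - a ^ n) * (1 - a ^ n) :=
        hu j ▸ smul_star_mul_self_le_of_smul_one_le (ha _ hz) (u j)
      _ ≤ 2 • (1 + star (a ^ n) * a ^ n) := by simpa using star_sub_mul_sub_le 1 (a ^ n)
      _ = _ := (ofNat_smul_eq_nsmul ℝ 2 _).symm
  have hparseval : ∑ j ∈ range n, star (u j) * u j =
      (n : ℝ) • ∑ k ∈ range n, star (a ^ k) * a ^ k := by
    rw [sum_star_mul_self_sum_pow_smul hw, sum_range_reflect fun k ↦ star (a ^ k) * a ^ k]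
  have hpos : (0 : ℝ) < n * 2 := by positivity
  refine le_of_smul_le_smul_left ?_ hpos
  calc
    (n * 2 : ℝ) • κ • ∑ k ∈ range n, star (a ^ k) * a ^ k
        = ∑ j ∈ range n, (2 * κ) • (star (u j) * u j) := by
      rw [← smul_sum, hparseval, smul_smul, smul_smul]
      congr 1
      ring
    _ ≤ ∑ _j ∈ range n, (2 : ℝ) • (1 + star (a ^ n) * a ^ n) := sum_le_sum fun j _ ↦ hterm j
    _ = _ := by rw [sum_const, card_range, ← Nat.cast_smul_eq_nsmul ℝ, smul_smul]

lemma smul_sum_Ico_star_pow_mul_pow_le {a : A} {κ : ℝ}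
    (ha : ∀ z : ℂ, ‖z‖ = 1 → (2 * κ) • 1 ≤ star (z • 1 - a) * (z • 1 - a)) {m n : ℕ}
    (hmn : m ≤ n) :
    κ • ∑ k ∈ Ico m n, star (a ^ k) * a ^ k ≤ star (a ^ m) * a ^ m + star (a ^ n) * a ^ n := by
  have hconj (k : ℕ) : star (a ^ m) * (star (a ^ k) * a ^ k) * a ^ m =
      star (a ^ (m + k)) * a ^ (m + k) := by
    rw [add_comm, pow_add, star_mul]
    simp only [mul_assoc]
  have h := star_left_conjugate_le_conjugate (smul_sum_star_pow_mul_pow_le ha (n - m)) (a ^ m)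
  simpa only [mul_smul_comm, smul_mul_assoc, mul_sum, sum_mul, mul_add, add_mul, mul_one, hconj,
    Nat.add_sub_cancel' hmn, ← sum_Ico_eq_sum_range (fun k ↦ star (a ^ k) * a ^ k)] using h
end RootsOfUnity

section OrderedModule

variable {𝕜 E : Type*} [Ring 𝕜] [PartialOrder 𝕜] [IsOrderedRing 𝕜] [AddCommGroup E]
  [PartialOrder E] [IsOrderedAddMonoid E] [Module 𝕜 E] [PosSMulMono 𝕜 E]

/- The tail defect `κ • ∑ k ∈ Ico m n, v k - v n` is at most `v m`, so dropping its `m`-th term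
multiplies it by at most `1 - κ`. -/
lemma smul_sum_Ico_sub_le_pow_smul {κ : 𝕜} (hκ : 0 ≤ κ) (hκ' : κ ≤ 1) {v : ℕ → E} {n : ℕ}
    (h : ∀ m ≤ n, κ • ∑ k ∈ Ico m n, v k ≤ v m + v n) {m : ℕ} (hm : m ≤ n) :
    κ • ∑ k ∈ Ico m n, v k - v n ≤ (1 - κ) ^ m • v 0 := by
  induction m with
  | zero => simpa using h 0 n.zero_le
  | succ m ih =>
    set s := κ • ∑ k ∈ Ico m n, v k - v n with hs
    have hsplit : κ • ∑ k ∈ Ico (m + 1) n, v k - v n = s - κ • v m := by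
      rw [hs, sum_eq_sum_Ico_succ_bot hm, smul_add]
      abel
    have hsm : s ≤ v m := sub_le_iff_le_add.mpr (h m (by lia))
    calc
      _ = s - κ • v m := hsplit
      _ ≤ s - κ • s := sub_le_sub_left (smul_le_smul_of_nonneg_left hsm hκ) s
      _ = (1 - κ) • s := by rw [sub_smul, one_smul]
      _ ≤ (1 - κ) • (1 - κ) ^ m • v 0 :=
        smul_le_smul_of_nonneg_left (ih (by lia)) (sub_nonneg.mpr hκ')
      _ = _ := by rw [smul_smul, pow_succ']

lemma smul_le_pow_smul_add {κ : 𝕜} (hκ : 0 ≤ κ) (hκ' : κ ≤ 1) {v : ℕ → E} (hv : ∀ k, 0 ≤ v k)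
    {n : ℕ} (h : ∀ m ≤ n, κ • ∑ k ∈ Ico m n, v k ≤ v m + v n) {m : ℕ} (hm : m < n) :
    κ • v m ≤ (1 - κ) ^ m • v 0 + v n := by
  have hsingle : v m ≤ ∑ k ∈ Ico m n, v k :=
    single_le_sum (fun k _ ↦ hv k) (left_mem_Ico.mpr hm)
  exact (smul_le_smul_of_nonneg_left hsingle hκ).trans
    (sub_le_iff_le_add.mp (smul_sum_Ico_sub_le_pow_smul hκ hκ' h hm.le))
end OrderedModule

section PowGrowth

variable {A : Type*} [Ring A] [StarRing A] [Algebra ℝ A] [StarModule ℝ A]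
  [PartialOrder A] [StarOrderedRing A]

/-- Exponential growth of the powers of `a`: along the multiples of some `n ≠ 0`, the elements
`star (a ^ k) * a ^ k` dominate `r ^ k`. For an operator this bounds `‖a ^ k x‖ ^ 2` from below by
`r ^ k * ‖x‖ ^ 2`, so `r` is the square of a rate. A single witness `n` suffices, since the bound
passes to its multiples when `0 ≤ r`. -/
def HasPowGrowth (a : A) (r : ℝ) : Prop :=
  ∃ n ≠ 0, r ^ n • 1 ≤ star (a ^ n) * a ^ n

lemma pow_smul_one_le_star_pow_mul_pow {b : A} {s : ℝ} (hs : 0 ≤ s) (hb : s • 1 ≤ star b * b)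
    (j : ℕ) : s ^ j • 1 ≤ star (b ^ j) * b ^ j := by
  induction j with
  | zero => simp
  | succ j ih =>
    calc
      s ^ (j + 1) • (1 : A) = s ^ j • s • 1 := by rw [pow_succ, mul_smul]
      _ ≤ s ^ j • (star b * b) := smul_le_smul_of_nonneg_left hb (pow_nonneg hs j)
      _ ≤ star (b ^ j * b) * (b ^ j * b) := smul_star_mul_self_le_of_smul_one_le ih b
      _ = _ := by rw [pow_succ]

namespace HasPowGrowth

variable {a : A} {r : ℝ}

lemma smul (h : HasPowGrowth a r) (t : ℝ) : HasPowGrowth (t • a) (t ^ 2 * r) := by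
  obtain ⟨n, hn, h⟩ := h
  refine ⟨n, hn, ?_⟩
  calc
    (t ^ 2 * r) ^ n • (1 : A) = (t ^ n * t ^ n) • r ^ n • 1 := by
      rw [smul_smul, mul_pow, ← pow_mul, mul_comm 2, pow_mul, sq]
    _ ≤ (t ^ n * t ^ n) • (star (a ^ n) * a ^ n) :=
      smul_le_smul_of_nonneg_left h (mul_self_nonneg _)
    _ = star ((t • a) ^ n) * (t • a) ^ n := by
      rw [smul_pow, star_smul, star_trivial (t ^ n), smul_mul_smul_comm]

lemma frequently (h : HasPowGrowth a r) (hr : 0 ≤ r) :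
    ∃ᶠ m in atTop, r ^ m • 1 ≤ star (a ^ m) * a ^ m := by
  obtain ⟨n, hn, h⟩ := h
  refine frequently_atTop.mpr fun M ↦ ⟨n * M, Nat.le_mul_of_pos_left M (by lia), ?_⟩
  simpa only [pow_mul] using pow_smul_one_le_star_pow_mul_pow (pow_nonneg hr n) h M

end HasPowGrowth

end PowGrowth

lemma eventually_pow_add_pow_le_mul_pow {κ ρ σ q : ℝ} (hκ : 0 < κ) (hρ : 0 ≤ ρ) (hρq : ρ < q)
    (hσ : 0 ≤ σ) (hσq : σ < q) : ∀ᶠ m : ℕ in atTop, ρ ^ m + σ ^ m ≤ κ * q ^ m := by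
  have hq : 0 < q := hρ.trans_lt hρq
  have hlim : Tendsto (fun m : ℕ ↦ (ρ / q) ^ m + (σ / q) ^ m) atTop (𝓝 (0 + 0)) :=
    (tendsto_pow_atTop_nhds_zero_of_lt_one (by positivity) ((div_lt_one hq).mpr hρq)).add
      (tendsto_pow_atTop_nhds_zero_of_lt_one (by positivity) ((div_lt_one hq).mpr hσq))
  filter_upwards [hlim.eventually_le_const (by simpa using hκ)] with m hm
  rwa [div_pow, div_pow, ← add_div, div_le_iff₀ (pow_pos hq m)] at hm

lemma Ico_zero_subset_of_forall_mul_lt {R : Set ℝ} {c D r₀ : ℝ} (hc : 0 < c) (hc' : c < 1)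
    (hr₀ : 0 < r₀) (hr₀R : r₀ ∈ R) (h : ∀ r ∈ R, ∀ T < D, c * T < r → Set.Ico 0 T ⊆ R) :
    Set.Ico 0 D ⊆ R := by
  rintro s ⟨hs, hsD⟩
  have hlt {r : ℝ} (hr : 0 < r) : r < r / c := (lt_div_iff₀' hc).mpr (mul_lt_of_lt_one_left hr hc')
  by_contra hsR
  have hub : s ∈ upperBounds R := fun r hr ↦ by
    by_contra! hsr
    obtain ⟨T, hsT, hT⟩ := exists_between (lt_min hsD (hsr.trans (hlt (hs.trans_lt hsr))))
    obtain ⟨hTD, hTr⟩ := lt_min_iff.mp hT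
    exact hsR (h r hr T hTD ((lt_div_iff₀' hc).mp hTr) ⟨hs, hsT⟩)
  have hbdd : BddAbove R := ⟨s, hub⟩
  have hsup : 0 < sSup R := hr₀.trans_le (le_csSup hbdd hr₀R)
  have hsupD : sSup R < D := (csSup_le ⟨r₀, hr₀R⟩ hub).trans_lt hsD
  obtain ⟨T, hT, hTmin⟩ := exists_between (lt_min hsupD (hlt hsup))
  obtain ⟨hTD, hTc⟩ := lt_min_iff.mp hTmin
  obtain ⟨r, hr, hrT⟩ := exists_lt_of_lt_csSup ⟨r₀, hr₀R⟩ ((lt_div_iff₀' hc).mp hTc)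
  obtain ⟨p, hp, hpT⟩ := exists_between hT
  exact hp.not_ge (le_csSup hbdd (h r hr T hTD hrT ⟨(hsup.trans hp).le, hpT⟩))

section ResolventBound

variable {A : Type*} [Ring A] [StarRing A] [Algebra ℂ A] [StarModule ℂ A]
  [PartialOrder A] [StarOrderedRing A]

lemma HasPowGrowth.of_lt_one {a : A} {κ p q : ℝ} (h : HasPowGrowth a q)
    (hκ : 0 < κ) (hκ' : κ ≤ 1)
    (ha : ∀ z : ℂ, ‖z‖ = 1 → (2 * κ) • 1 ≤ star (z • 1 - a) * (z • 1 - a))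
    (hq : 1 - κ < q) (hp : 0 ≤ p) (hp' : p < 1) : HasPowGrowth a p := by
  have hq0 : 0 < q := (sub_nonneg.mpr hκ').trans_lt hq
  obtain ⟨l, hl⟩ : ∃ l, p ^ (l + 2) < q := by
    obtain ⟨l, hl⟩ := exists_pow_lt_of_lt_one hq0 hp'
    exact ⟨l, (pow_le_pow_of_le_one hp hp'.le (by lia)).trans_lt hl⟩
  have hev := eventually_pow_add_pow_le_mul_pow hκ (sub_nonneg.mpr hκ') hq
    (pow_nonneg hp (l + 2)) hl
  obtain ⟨m, hgrow, hpow, hm⟩ :=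
    ((h.frequently hq0.le).and_eventually (hev.and (eventually_ne_atTop 0))).exists
  have hmn : m < (l + 2) * m := by nlinarith [Nat.pos_of_ne_zero hm]
  refine ⟨(l + 2) * m, by positivity, ?_⟩
  have hdich : κ • (star (a ^ m) * a ^ m) ≤
      (1 - κ) ^ m • 1 + star (a ^ ((l + 2) * m)) * a ^ ((l + 2) * m) := by
    simpa using smul_le_pow_smul_add hκ.le hκ' (fun k ↦ star_mul_self_nonneg (a ^ k))
      (fun k hk ↦ smul_sum_Ico_star_pow_mul_pow_le ha hk) hmn
  calc
    p ^ ((l + 2) * m) • (1 : A) ≤ (κ * q ^ m - (1 - κ) ^ m) • 1 :=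
      smul_le_smul_of_nonneg_right (by rw [pow_mul]; linarith) zero_le_one
    _ = κ • q ^ m • 1 - (1 - κ) ^ m • 1 := by rw [sub_smul, mul_smul]
    _ ≤ κ • (star (a ^ m) * a ^ m) - (1 - κ) ^ m • 1 :=
      sub_le_sub_right (smul_le_smul_of_nonneg_left hgrow hκ.le) _
    _ ≤ _ := sub_le_iff_le_add'.mpr hdich

lemma HasPowGrowth.of_lt_sq {a : A} {κ r s t : ℝ} (h : HasPowGrowth a r)
    (hκ : 0 < κ) (hκ' : κ ≤ 1) (ht : 0 < t)
    (ha : ∀ z : ℂ, ‖z‖ = t → (2 * κ * t ^ 2) • 1 ≤ star (z • 1 - a) * (z • 1 - a))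
    (hr : (1 - κ) * t ^ 2 < r) (hs : 0 ≤ s) (hst : s < t ^ 2) : HasPowGrowth a s := by
  have ht2 : 0 < t ^ 2 := by positivity
  have hcircle (z : ℂ) (hz : ‖z‖ = 1) :
      (2 * κ) • 1 ≤ star (z • 1 - t⁻¹ • a) * (z • 1 - t⁻¹ • a) := by
    have hscale : z • 1 - t⁻¹ • a = t⁻¹ • ((t * z) • 1 - a) := by
      rw [smul_sub, mul_smul, Complex.coe_smul, inv_smul_smul₀ ht.ne']
    calc
      (2 * κ) • (1 : A) = (t⁻¹ * t⁻¹) • (2 * κ * t ^ 2) • 1 := by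
        rw [smul_smul]
        congr 1
        field_simp
      _ ≤ (t⁻¹ * t⁻¹) • (star ((t * z) • 1 - a) * ((t * z) • 1 - a)) :=
        smul_le_smul_of_nonneg_left (ha _ (by simp [hz, ht.le])) (mul_self_nonneg _)
      _ = _ := by rw [hscale, star_smul, star_trivial t⁻¹, smul_mul_smul_comm]
  have hnorm : HasPowGrowth (t⁻¹ • a) (s / t ^ 2) :=
    (h.smul t⁻¹).of_lt_one hκ hκ' hcircle
      (by rwa [inv_pow, inv_mul_eq_div, lt_div_iff₀ ht2]) (by positivity) ((div_lt_one ht2).mpr hst)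
  simpa [smul_inv_smul₀ ht.ne', mul_div_cancel₀ _ ht2.ne'] using hnorm.smul t

lemma hasPowGrowth_of_forall_norm_le {a : A} {d ε s : ℝ} (hd : 0 ≤ d) (hε : 0 < ε)
    (ha : ∀ z : ℂ, ‖z‖ ≤ d → ε • 1 ≤ star (z • 1 - a) * (z • 1 - a))
    (hs : 0 ≤ s) (hsd : s < d ^ 2) : HasPowGrowth a s := by
  have hd2 : 0 < d ^ 2 := hs.trans_lt hsd
  obtain ⟨κ, hκ, hκmin⟩ := exists_between (show 0 < min 1 (ε / (2 * d ^ 2)) by positivity)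
  obtain ⟨hκ1, hκε⟩ := lt_min_iff.mp hκmin
  rw [lt_div_iff₀ (by positivity)] at hκε
  have hεR : HasPowGrowth a ε := ⟨1, one_ne_zero, by simpa using ha 0 (by simpa using hd)⟩
  refine Ico_zero_subset_of_forall_mul_lt (R := {r | HasPowGrowth a r}) (sub_pos.mpr hκ1)
    (sub_lt_self 1 hκ) hε hεR (fun r hr T hTd hTr p ⟨hp, hpT⟩ ↦ ?_) ⟨hs, hsd⟩
  have hT : 0 < T := hp.trans_lt hpT
  refine hr.of_lt_sq hκ hκ1.le (Real.sqrt_pos.mpr hT) (fun z hz ↦ ?_)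
    (by rwa [Real.sq_sqrt hT.le]) hp (by rwa [Real.sq_sqrt hT.le])
  rw [Real.sq_sqrt hT.le]
  exact (smul_le_smul_of_nonneg_right (by nlinarith) zero_le_one).trans
    (ha z (hz.trans_le ((Real.sqrt_le_left hd).mpr hTd.le)))

end ResolventBound

section CStarAlgebra

variable {A : Type*} [CStarAlgebra A] [PartialOrder A] [StarOrderedRing A]

lemma isStrictlyPositive_star_mul_self_of_mul_eq_one {a b : A} (h : b * a = 1) :
    IsStrictlyPositive (star a * a) := by
  set c := ‖star b * b‖
  have hle : 1 ≤ (c + 1) • (star a * a) :=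
    calc
      1 = star (b * a) * (b * a) := by simp [h]
      _ = star a * (star b * b) * a := by simp only [star_mul, mul_assoc]
      _ ≤ c • (star a * a) := CStarAlgebra.star_left_conjugate_le_norm_smul
      _ ≤ _ := smul_le_smul_of_nonneg_right (by linarith) (star_mul_self_nonneg a)
  have hc : 0 < c + 1 := by positivity
  exact (isStrictlyPositive_one.smul (inv_pos.mpr hc)).of_le ((inv_smul_le_iff_of_pos hc).mpr hle)

lemma smul_one_le_iff_norm_ringInverse_le {b : A} (hb : IsStrictlyPositive b) {r : ℝ} (hr : 0 < r) :
    r • 1 ≤ b ↔ ‖Ring.inverse b‖ ≤ r⁻¹ := by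
  have hr1 : IsStrictlyPositive (r • 1 : A) := isStrictlyPositive_one.smul hr
  have hinv : Ring.inverse (r • 1 : A) = r⁻¹ • 1 := by
    have hmul : r⁻¹ • (1 : A) = Ring.inverse (r • 1) * (r • 1) * r⁻¹ • 1 := by
      rw [Ring.inverse_mul_cancel _ hr1.isUnit, one_mul]
    rw [hmul, mul_assoc, smul_mul_smul_comm, mul_inv_cancel₀ hr.ne', one_smul, mul_one, mul_one]
  rw [CStarAlgebra.norm_le_iff_le_algebraMap _ (by positivity) hb.ringInverse.nonneg,
    Algebra.algebraMap_eq_smul_one, ← hinv]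
  refine ⟨fun h ↦ CStarAlgebra.ringInverse_le_ringInverse h hr1, fun h ↦ ?_⟩
  simpa only [Ring.inverse_inverse, hb.isUnit, hr1.isUnit] using
    CStarAlgebra.ringInverse_le_ringInverse h hb.ringInverse

lemma exists_forall_smul_one_le_of_isCompact {X : Type*} [TopologicalSpace X] {K : Set X}
    (hK : IsCompact K) {g : X → A} (hg : ContinuousOn g K)
    (hpos : ∀ x ∈ K, IsStrictlyPositive (g x)) :
    ∃ ε : ℝ, 0 < ε ∧ ∀ x ∈ K, ε • 1 ≤ g x := by
  have hinv : ContinuousOn (fun x ↦ Ring.inverse (g x)) K := fun x hx ↦ by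
    obtain ⟨u, hu⟩ := (hpos x hx).isUnit
    exact (hu ▸ NormedRing.inverse_continuousAt u).comp_continuousWithinAt (hg x hx)
  obtain ⟨C, hC⟩ := hK.exists_bound_of_continuousOn hinv
  have hM : 0 < max C 1 := by positivity
  refine ⟨(max C 1)⁻¹, inv_pos.mpr hM, fun x hx ↦ ?_⟩
  rw [smul_one_le_iff_norm_ringInverse_le (hpos x hx) (inv_pos.mpr hM), inv_inv]
  exact (hC x hx).trans (le_max_left C 1)

lemma exists_mul_eq_one_and_norm_sq_le {a : A} {r : ℝ} (hr : 0 < r) (h : r • 1 ≤ star a * a) :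
    ∃ b, b * a = 1 ∧ ‖b‖ ^ 2 ≤ r⁻¹ := by
  have hpos : IsStrictlyPositive (star a * a) := (isStrictlyPositive_one.smul hr).of_le h
  set g := Ring.inverse (star a * a)
  have hg : g * (star a * a) = 1 := Ring.inverse_mul_cancel _ hpos.isUnit
  have hself : star g = g := hpos.ringInverse.isSelfAdjoint.star_eq
  refine ⟨g * star a, by rw [mul_assoc, hg], ?_⟩
  calc
    ‖g * star a‖ ^ 2 = ‖g * star a * star (g * star a)‖ := by rw [CStarRing.norm_self_mul_star, sq]
    _ = ‖g * (star a * a) * g‖ := by simp only [star_mul, star_star, hself, mul_assoc]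
    _ = ‖g‖ := by rw [hg, one_mul]
    _ ≤ r⁻¹ := (smul_one_le_iff_norm_ringInverse_le hpos hr).mp h

lemma exists_mul_eq_one_and_le_inv_spectralRadius {a G : A} {s : ℝ} (hG : IsStrictlyPositive G)
    (hs : 0 < s) (h : s ^ 2 • G ≤ star a * G * a) :
    ∃ b, b * a = 1 ∧ ENNReal.ofReal s ≤ (spectralRadius ℂ b)⁻¹ := by
  obtain ⟨p, hp⟩ := hG.isUnit_cfcSqrt
  have hpG : star (p : A) * p = G := by
    rw [hp, (CFC.sqrt_nonneg G).isSelfAdjoint.star_eq, CFC.sqrt_mul_sqrt_self G hG.nonneg]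
  have hconj : s ^ 2 • 1 ≤ star (p * a * ↑p⁻¹) * (p * a * ↑p⁻¹) := by
    calc
      s ^ 2 • (1 : A) = star (↑p⁻¹ : A) * (s ^ 2 • G) * ↑p⁻¹ := by
        rw [← hpG, mul_smul_comm, smul_mul_assoc, ← mul_assoc, ← star_mul, p.mul_inv, star_one,
          one_mul, p.mul_inv]
      _ ≤ star (↑p⁻¹ : A) * (star a * G * a) * ↑p⁻¹ := star_left_conjugate_le_conjugate h _
      _ = _ := by simp only [← hpG, star_mul, mul_assoc]
  obtain ⟨l, hl, hnorm⟩ := exists_mul_eq_one_and_norm_sq_le (by positivity) hconj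
  refine ⟨↑p⁻¹ * l * p, ?_, ?_⟩
  · calc
      ↑p⁻¹ * l * p * a = ↑p⁻¹ * (l * (p * a * ↑p⁻¹)) * p := by simp [mul_assoc]
      _ = 1 := by simp [hl]
  rw [ENNReal.le_inv_iff_le_inv, spectralRadius, spectrum.units_conjugate', ← spectralRadius,
    ← ENNReal.ofReal_inv_of_pos hs]
  have hl' : ‖l‖ ≤ s⁻¹ := by
    rw [← inv_pow] at hnorm
    exact le_of_sq_le_sq hnorm (by positivity)
  rcases subsingleton_or_nontrivial A
  · simp
  calc
    spectralRadius ℂ l ≤ ‖l‖₊ := spectrum.spectralRadius_le_nnnorm l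
    _ = ENNReal.ofReal ‖l‖ := (ofReal_norm l).symm
    _ ≤ _ := ENNReal.ofReal_le_ofReal hl'

lemma HasPowGrowth.exists_smul_le_star_mul_mul {a : A} {r : ℝ} (h : HasPowGrowth a r) (hr : 0 < r) :
    ∃ G : A, IsStrictlyPositive G ∧ r • G ≤ star a * G * a := by
  obtain ⟨n, hn, h⟩ := h
  let v (k : ℕ) : A := r⁻¹ ^ k • (star (a ^ k) * a ^ k)
  have hv (k : ℕ) : 0 ≤ v k := smul_nonneg (by positivity) (star_mul_self_nonneg _)
  have hv0 : v 0 = 1 := by simp [v]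
  have hvn : v 0 ≤ v n := by
    rw [hv0]
    simpa only [v, inv_pow] using (le_inv_smul_iff_of_pos (pow_pos hr n)).mpr h
  have hshift (k : ℕ) : star a * v k * a = r • v (k + 1) := by
    simp only [v, smul_smul, mul_smul_comm, smul_mul_assoc, pow_succ, star_mul, mul_assoc]
    rw [mul_left_comm, mul_inv_cancel₀ hr.ne', mul_one]
  refine ⟨∑ k ∈ range n, v k, isStrictlyPositive_one.of_le ?_, ?_⟩
  · exact hv0 ▸ single_le_sum (fun k _ ↦ hv k) (mem_range.mpr (Nat.pos_of_ne_zero hn))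
  calc
    r • ∑ k ∈ range n, v k ≤ r • ∑ k ∈ range n, v (k + 1) := by
      refine smul_le_smul_of_nonneg_left ?_ hr.le
      rw [← sub_nonneg, ← sum_sub_distrib, sum_range_sub]
      exact sub_nonneg.mpr hvn
    _ = star a * (∑ k ∈ range n, v k) * a := by simp only [mul_sum, sum_mul, smul_sum, hshift]

end CStarAlgebra

section LeftSpectrum

/-- The left spectrum of `a`: the scalars `z` for which `z • 1 - a` has no left inverse. -/
def leftSpectrum (R : Type*) {A : Type*} [CommRing R] [Ring A] [Algebra R A] (a : A) : Set R :=
  {z | ¬ ∃ b : A, b * (z • 1 - a) = 1}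

lemma inv_spectralRadius_le_infEDist_leftSpectrum {𝕜 A : Type*} [NontriviallyNormedField 𝕜]
    [NormedRing A] [CompleteSpace A] [NormedAlgebra 𝕜 A] {a b : A} (h : b * a = 1) :
    (spectralRadius 𝕜 b)⁻¹ ≤ Metric.infEDist 0 (leftSpectrum 𝕜 a) := by
  refine Metric.le_infEDist.mpr fun z hz ↦ ?_
  by_contra! hlt
  rw [edist_zero_left] at hlt
  obtain ⟨u, hu⟩ := spectrum.isUnit_one_sub_smul_of_lt_inv_radius hlt
  have hb : b * (z • 1 - a) = -u := by rw [hu, mul_sub, h, mul_smul_comm, mul_one, neg_sub]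
  exact hz ⟨-(↑u⁻¹ * b), by rw [neg_mul, mul_assoc, hb, mul_neg, neg_neg, u.inv_mul]⟩

variable {A : Type*} [CStarAlgebra A]

lemma exists_mul_eq_one_and_le_inv_spectralRadius_of_lt_infEDist {a : A} {ρ : ENNReal}
    (h : ρ < Metric.infEDist 0 (leftSpectrum ℂ a)) :
    ∃ b, b * a = 1 ∧ ρ ≤ (spectralRadius ℂ b)⁻¹ := by
  let _ := CStarAlgebra.spectralOrder A
  have := CStarAlgebra.spectralOrderedRing A
  obtain ⟨σ, hρσ, hσ⟩ := exists_between h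
  obtain ⟨δ, hσδ, hδ⟩ := exists_between hσ
  have hs : 0 < σ.toReal := ENNReal.toReal_pos hρσ.ne_bot hσδ.ne_top
  have hsd : σ.toReal < δ.toReal := ENNReal.toReal_strict_mono hδ.ne_top hσδ
  have hpos (z : ℂ) (hz : z ∈ Metric.closedBall 0 δ.toReal) :
      IsStrictlyPositive (star (z • 1 - a) * (z • 1 - a)) := by
    have hzδ : ‖z‖ₑ ≤ δ := by
      rw [← ofReal_norm]
      exact ENNReal.ofReal_le_of_le_toReal (mem_closedBall_zero_iff.mp hz)
    obtain ⟨b, hb⟩ : ∃ b, b * (z • 1 - a) = 1 := not_not.mp fun hmem ↦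
      (hzδ.trans_lt hδ).not_ge <| by
        simpa [enorm_eq_nnnorm] using
          Metric.infEDist_le_edist_of_mem (x := 0) (s := leftSpectrum ℂ a) hmem
    exact isStrictlyPositive_star_mul_self_of_mul_eq_one hb
  obtain ⟨ε, hε, hle⟩ :=
    exists_forall_smul_one_le_of_isCompact (isCompact_closedBall 0 δ.toReal) (by fun_prop) hpos
  have hgrow : HasPowGrowth a (σ.toReal ^ 2) :=
    hasPowGrowth_of_forall_norm_le (hs.trans hsd).le hε
      (fun z hz ↦ hle z (mem_closedBall_zero_iff.mpr hz)) (by positivity) (by gcongr)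
  obtain ⟨G, hG, hGa⟩ := hgrow.exists_smul_le_star_mul_mul (by positivity)
  obtain ⟨b, hb, hle⟩ := exists_mul_eq_one_and_le_inv_spectralRadius hG hs hGa
  exact ⟨b, hb, hρσ.le.trans (by rwa [ENNReal.ofReal_toReal hσδ.ne_top] at hle)⟩

theorem dist_to_left_spectrum_eq_sup_general (a : A) :
    Metric.infEDist 0 (leftSpectrum ℂ a) = ⨆ b ∈ {b : A | b * a = 1}, (spectralRadius ℂ b)⁻¹ := by
  refine le_antisymm (le_of_forall_lt_imp_le_of_dense fun ρ hρ ↦ ?_)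
    (iSup₂_le fun b hb ↦ inv_spectralRadius_le_infEDist_leftSpectrum hb)
  obtain ⟨b, hb, hle⟩ := exists_mul_eq_one_and_le_inv_spectralRadius_of_lt_infEDist hρ
  exact le_iSup₂_of_le b hb hle

end LeftSpectrum

theorem dist_to_left_spectrum_eq_sup
    {H : Type*} [NormedAddCommGroup H] [InnerProductSpace ℂ H] [CompleteSpace H]
    [TopologicalSpace.SeparableSpace H]
    (T : H →L[ℂ] H) (hT : ∃ S : H →L[ℂ] H, S * T = 1) :
    EMetric.infEdist (0 : ℂ)
        {z : ℂ | ¬ ∃ L : H →L[ℂ] H, L * (z • (1 : H →L[ℂ] H) - T) = 1} =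
      ⨆ S ∈ {S : H →L[ℂ] H | S * T = 1}, (spectralRadius ℂ S)⁻¹ :=
  dist_to_left_spectrum_eq_sup_general T
end

section
/- Let T ∈ L(H) be left invertible and set s(T) = sup{1/r(S) : S T = I}. Then s(Tⁿ) = s(T)ⁿ for all n ≥ 1. -/
/-!
Replacing a left inverse `S` of `T` by `S ^ n` gives `s(T) ^ n ≤ s(T ^ n)`. For the converse, let
`S * T ^ n = 1` and `r(S) < c ^ n`. By Gelfand's formula `‖S ^ N‖ < c ^ (n * N)` for some `N ≥ 1`,
so with `m = n * N` the operator `c • T` satisfies `‖x‖ ≤ ‖(c • T) ^ m x‖`. In the equivalent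
Hilbert norm `|x|² = ∑ k < m, ‖(c • T) ^ k x‖²` the operator `c • T` is therefore expanding, and
inverting it after the orthogonal projection onto its range gives a left inverse of norm at most
`1`. Rescaling, `T` has a left inverse of spectral radius at most `c`, whence `1 / c ≤ s(T)`.
-/

open Filter
open scoped ENNReal NNReal

/-- The supremum of `1 / r(b)` over the left inverses `b` of `a`, denoted `s(a)`. It
takes values in `ℝ≥0∞`: it is `0` if `a` has no left inverse, and a left inverse of spectral radius
`0` contributes `∞`. -/
noncomputable def leftInverseRadius (𝕜 : Type*) {A : Type*} [NormedField 𝕜] [Ring A] [Algebra 𝕜 A]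
    (a : A) : ℝ≥0∞ :=
  ⨆ b ∈ {b : A | b * a = 1}, (spectralRadius 𝕜 b)⁻¹

section LeftInverseRadius

variable {𝕜 A : Type*} [NormedField 𝕜] [Ring A] [Algebra 𝕜 A]

theorem inv_spectralRadius_le_leftInverseRadius {a b : A} (h : b * a = 1) :
    (spectralRadius 𝕜 b)⁻¹ ≤ leftInverseRadius 𝕜 a :=
  le_iSup₂ (f := fun (b : A) (_ : b ∈ {b : A | b * a = 1}) => (spectralRadius 𝕜 b)⁻¹) b h

theorem spectralRadius_pow_of_ne_zero [IsAlgClosed 𝕜] (a : A) {n : ℕ} (hn : n ≠ 0) :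
    spectralRadius 𝕜 (a ^ n) = spectralRadius 𝕜 a ^ n := by
  simp only [spectralRadius, spectrum.map_pow_of_pos a (Nat.pos_of_ne_zero hn), iSup_image,
    ENNReal.iSup₂_pow_of_ne_zero _ hn, nnnorm_pow, ENNReal.coe_pow]

theorem pow_leftInverseRadius_le [IsAlgClosed 𝕜] (a : A) {n : ℕ} (hn : n ≠ 0) :
    leftInverseRadius 𝕜 a ^ n ≤ leftInverseRadius 𝕜 (a ^ n) := by
  rw [leftInverseRadius, ENNReal.iSup₂_pow_of_ne_zero _ hn]
  refine iSup₂_le fun b hb => ?_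
  rw [← ENNReal.inv_pow, ← spectralRadius_pow_of_ne_zero b hn]
  exact inv_spectralRadius_le_leftInverseRadius (pow_mul_pow_eq_one n hb)

end LeftInverseRadius

theorem eventually_nnnorm_pow_lt_pow_of_spectralRadius_lt {A : Type*} [NormedRing A]
    [NormedAlgebra ℂ A] [CompleteSpace A] {a : A} {c : ℝ≥0} (h : spectralRadius ℂ a < c) :
    ∀ᶠ k : ℕ in atTop, ‖a ^ k‖₊ < c ^ k := by
  have gelfand := spectrum.pow_nnnorm_pow_one_div_tendsto_nhds_spectralRadius a
  filter_upwards [gelfand.eventually_lt_const h, eventually_gt_atTop 0] with k root_lt k_pos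
  rw [one_div, ENNReal.rpow_inv_lt_iff (Nat.cast_pos.2 k_pos), ENNReal.rpow_natCast] at root_lt
  exact_mod_cast root_lt

section OrbitMap

variable {𝕜 E : Type*} [NontriviallyNormedField 𝕜] [NormedAddCommGroup E] [NormedSpace 𝕜 E]

/-- The map `x ↦ (x, T x, …, T ^ (m - 1) x)` into the `ℓ²`-sum of `m` copies of `E`. Pulling the
norm back along it renorms `E`. -/
noncomputable def orbitMap (T : E →L[𝕜] E) (m : ℕ) : E →L[𝕜] PiLp 2 fun _ : Fin m => E :=
  ((PiLp.continuousLinearEquiv 2 𝕜 fun _ : Fin m => E).symm :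
    (Fin m → E) →L[𝕜] PiLp 2 fun _ : Fin m => E) ∘L .pi fun k : Fin m => T ^ (k : ℕ)

theorem norm_sq_orbitMap (T : E →L[𝕜] E) (m : ℕ) (x : E) :
    ‖orbitMap T m x‖ ^ 2 = ∑ k ∈ Finset.range m, ‖(T ^ k) x‖ ^ 2 := by
  rw [PiLp.norm_sq_eq_of_L2, Finset.sum_range]
  rfl

theorem antilipschitzWith_orbitMap (T : E →L[𝕜] E) {m : ℕ} (hm : m ≠ 0) :
    AntilipschitzWith 1 (orbitMap T m) := by
  refine (orbitMap T m).antilipschitz_of_bound fun x => ?_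
  rw [NNReal.coe_one, one_mul]
  refine le_of_sq_le_sq ?_ (norm_nonneg _)
  calc ‖x‖ ^ 2 = ‖(T ^ 0) x‖ ^ 2 := by rw [pow_zero, one_apply_eq_self]
    _ ≤ ∑ k ∈ Finset.range m, ‖(T ^ k) x‖ ^ 2 :=
      Finset.single_le_sum (f := fun k => ‖(T ^ k) x‖ ^ 2) (fun _ _ => sq_nonneg _)
        (Finset.mem_range.2 (Nat.pos_of_ne_zero hm))
    _ = ‖orbitMap T m x‖ ^ 2 := (norm_sq_orbitMap T m x).symm

theorem norm_sq_orbitMap_apply_add_norm_sq (T : E →L[𝕜] E) (m : ℕ) (x : E) :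
    ‖orbitMap T m (T x)‖ ^ 2 + ‖x‖ ^ 2 = ‖orbitMap T m x‖ ^ 2 + ‖(T ^ m) x‖ ^ 2 := by
  rw [norm_sq_orbitMap, norm_sq_orbitMap, ← Finset.sum_range_succ (fun k => ‖(T ^ k) x‖ ^ 2),
    Finset.sum_range_succ']
  simp only [pow_succ T, pow_zero, mul_apply_eq_comp, one_apply_eq_self]

theorem norm_orbitMap_le_norm_orbitMap_apply {T : E →L[𝕜] E} {m : ℕ} {x : E}
    (hx : ‖x‖ ≤ ‖(T ^ m) x‖) : ‖orbitMap T m x‖ ≤ ‖orbitMap T m (T x)‖ := by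
  refine le_of_sq_le_sq ?_ (norm_nonneg _)
  have := norm_sq_orbitMap_apply_add_norm_sq T m x
  have : ‖x‖ ^ 2 ≤ ‖(T ^ m) x‖ ^ 2 := by gcongr
  linarith

end OrbitMap

section OperatorNorm

variable {𝕜 E : Type*} [NontriviallyNormedField 𝕜] [NormedAddCommGroup E] [NormedSpace 𝕜 E]

theorem antilipschitzWith_of_mul_eq_one {S T : E →L[𝕜] E} (h : S * T = 1) {c : ℝ≥0}
    (hS : ‖S‖₊ ≤ c) : AntilipschitzWith c T :=
  (S.lipschitz.weaken hS).to_rightInverse fun x => DFunLike.congr_fun h x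

theorem spectralRadius_le_opNNNorm [CompleteSpace E] (L : E →L[𝕜] E) :
    spectralRadius 𝕜 L ≤ ‖L‖₊ := by
  cases subsingleton_or_nontrivial E
  · simp only [spectrum.SpectralRadius.of_subsingleton, zero_le]
  · exact spectrum.spectralRadius_le_nnnorm L

end OperatorNorm

section LeftInverse

variable {𝕜 E F : Type*} [RCLike 𝕜] [NormedAddCommGroup E] [InnerProductSpace 𝕜 E]
  [NormedAddCommGroup F] [InnerProductSpace 𝕜 F]

theorem exists_leftInverse_norm_le_of_antilipschitzWith [CompleteSpace E] [CompleteSpace F]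
    {A : E →L[𝕜] F} {c : ℝ≥0} (hA : AntilipschitzWith c A) :
    ∃ B : F →L[𝕜] E, B ∘L A = .id 𝕜 E ∧ ‖B‖ ≤ c := by
  have closed_range : IsClosed (Set.range A) := hA.isClosed_range A.uniformContinuous
  have : CompleteSpace A.range := closed_range.completeSpace_coe
  let e : E ≃L[𝕜] A.range := A.equivRange hA.injective closed_range
  let P : F →L[𝕜] A.range := A.range.orthogonalProjectionOnto
  refine ⟨(e.symm : A.range →L[𝕜] E) ∘L P, ?_, ?_⟩
  · ext x
    have projection_apply : P (A x) = e x :=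
      A.range.orthogonalProjectionOnto_mem_subspace_eq_self (e x)
    simp [projection_apply]
  · refine ContinuousLinearMap.opNorm_le_bound _ c.2 fun y => ?_
    have apply_leftInverse : A (e.symm (P y)) = P y :=
      congrArg Subtype.val (e.apply_symm_apply (P y))
    calc ‖e.symm (P y)‖ ≤ c * ‖A (e.symm (P y))‖ := A.bound_of_antilipschitz hA _
      _ = c * ‖P y‖ := by rw [apply_leftInverse, Submodule.coe_norm]
      _ ≤ c * ‖y‖ := by gcongr; exact A.range.norm_orthogonalProjectionOnto_apply_le y

theorem exists_leftInverse_spectralRadius_le_of_equiv [CompleteSpace F] (e : E ≃L[𝕜] F)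
    {T : E →L[𝕜] E} {c : ℝ≥0} (hT : ∀ x, ‖e x‖ ≤ c * ‖e (T x)‖) :
    ∃ L : E →L[𝕜] E, L * T = 1 ∧ spectralRadius 𝕜 L ≤ c := by
  -- Conjugation by `e` preserves spectra, so `L` may be estimated in the norm of `F`.
  let conj : (E →L[𝕜] E) ≃ₐ[𝕜] (F →L[𝕜] F) := e.conjContinuousAlgEquiv.toAlgEquiv
  have conj_antilipschitz : AntilipschitzWith c (conj T) :=
    (conj T).antilipschitz_of_bound fun y => by simpa [conj] using hT (e.symm y)
  obtain ⟨B, leftInverse, norm_le⟩ :=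
    exists_leftInverse_norm_le_of_antilipschitzWith conj_antilipschitz
  refine ⟨conj.symm B, conj.injective ?_, ?_⟩
  · rw [map_mul, conj.apply_symm_apply, map_one]
    exact leftInverse
  · calc spectralRadius 𝕜 (conj.symm B) = spectralRadius 𝕜 B := by
          simp only [spectralRadius, AlgEquiv.spectrum_eq]
      _ ≤ ‖B‖₊ := spectralRadius_le_opNNNorm B
      _ ≤ c := ENNReal.coe_le_coe.2 norm_le

theorem exists_leftInverse_spectralRadius_le_of_antilipschitzWith_pow [CompleteSpace E]
    {T : E →L[𝕜] E} {m : ℕ} (hm : m ≠ 0) {c : ℝ≥0} (hT : AntilipschitzWith (c ^ m) (T ^ m)) :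
    ∃ L : E →L[𝕜] E, L * T = 1 ∧ spectralRadius 𝕜 L ≤ c := by
  let R : E →L[𝕜] E := ((c : ℝ) : 𝕜) • T
  have norm_le_norm_pow (x : E) : ‖x‖ ≤ ‖(R ^ m) x‖ := by
    simpa [R, smul_pow, norm_smul] using (T ^ m).bound_of_antilipschitz hT x
  let V := orbitMap R m
  have V_antilipschitz : AntilipschitzWith 1 V := antilipschitzWith_orbitMap R hm
  have closed_range : IsClosed (Set.range V) :=
    V_antilipschitz.isClosed_range V.uniformContinuous
  have : CompleteSpace V.range := closed_range.completeSpace_coe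
  let e : E ≃L[𝕜] V.range := V.equivRange V_antilipschitz.injective closed_range
  refine exists_leftInverse_spectralRadius_le_of_equiv e fun x => ?_
  calc ‖V x‖ ≤ ‖V (R x)‖ := norm_orbitMap_le_norm_orbitMap_apply (norm_le_norm_pow x)
    _ = c * ‖V (T x)‖ := by simp [R, norm_smul]

end LeftInverse

section PowerLeftInverse

variable {H : Type*} [NormedAddCommGroup H] [InnerProductSpace ℂ H] [CompleteSpace H]

theorem exists_leftInverse_spectralRadius_le_of_mul_pow_eq_one {S T : H →L[ℂ] H} {n : ℕ}
    (hn : n ≠ 0) (h : S * T ^ n = 1) {c : ℝ≥0} (hc : spectralRadius ℂ S < c ^ n) :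
    ∃ L : H →L[ℂ] H, L * T = 1 ∧ spectralRadius ℂ L ≤ c := by
  obtain ⟨N, norm_lt, N_ne_zero⟩ :=
    ((eventually_nnnorm_pow_lt_pow_of_spectralRadius_lt (by exact_mod_cast hc)).and
      (eventually_ne_atTop 0)).exists
  have mul_eq_one : S ^ N * T ^ (n * N) = 1 := by
    rw [pow_mul]
    exact pow_mul_pow_eq_one N h
  refine exists_leftInverse_spectralRadius_le_of_antilipschitzWith_pow (mul_ne_zero hn N_ne_zero) ?_
  rw [pow_mul c]
  exact antilipschitzWith_of_mul_eq_one mul_eq_one norm_lt.le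

theorem leftInverseRadius_pow_le (T : H →L[ℂ] H) {n : ℕ} (hn : n ≠ 0) :
    leftInverseRadius ℂ (T ^ n) ≤ leftInverseRadius ℂ T ^ n := by
  refine iSup₂_le fun S hS => ?_
  rw [ENNReal.inv_le_iff_inv_le, ENNReal.inv_pow, ← ENNReal.rpow_natCast,
    ← ENNReal.le_rpow_inv_iff (by positivity)]
  by_contra! root_lt
  obtain ⟨c, root_lt_c, c_lt⟩ := ENNReal.lt_iff_exists_nnreal_btwn.1 root_lt
  rw [ENNReal.rpow_inv_lt_iff (by positivity), ENNReal.rpow_natCast] at root_lt_c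
  obtain ⟨L, leftInverse, radius_le⟩ :=
    exists_leftInverse_spectralRadius_le_of_mul_pow_eq_one hn hS root_lt_c
  refine c_lt.not_ge (ENNReal.inv_le_iff_inv_le.2 ?_)
  calc (c : ℝ≥0∞)⁻¹ ≤ (spectralRadius ℂ L)⁻¹ := ENNReal.inv_le_inv.2 radius_le
    _ ≤ leftInverseRadius ℂ T := inv_spectralRadius_le_leftInverseRadius leftInverse

theorem s_of_pow_eq_pow_of_s_general (T : H →L[ℂ] H) {n : ℕ} (hn : n ≠ 0) :
    leftInverseRadius ℂ (T ^ n) = leftInverseRadius ℂ T ^ n :=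
  le_antisymm (leftInverseRadius_pow_le T hn) (pow_leftInverseRadius_le T hn)

end PowerLeftInverse

theorem s_of_pow_eq_pow_of_s
    {H : Type*} [NormedAddCommGroup H] [InnerProductSpace ℂ H] [CompleteSpace H]
    [TopologicalSpace.SeparableSpace H]
    (T : H →L[ℂ] H) (hT : ∃ S : H →L[ℂ] H, S * T = 1) :
    ∀ n : ℕ, 1 ≤ n →
      (⨆ S ∈ {S : H →L[ℂ] H | S * T ^ n = 1}, (spectralRadius ℂ S)⁻¹) =
        (⨆ S ∈ {S : H →L[ℂ] H | S * T = 1}, (spectralRadius ℂ S)⁻¹) ^ n :=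
  fun _ hn => s_of_pow_eq_pow_of_s_general T (Nat.one_le_iff_ne_zero.1 hn)
end
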